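/- arXiv:2310.12728 — 4 statements merged into one kernel-verified Lean document; each statement's English description precedes it below -/
import Mathlib

section
/- Let H be a Hopf algebra over a field k and let B be a left ideal coideal of H. Let π : H → H/B be the canonical k-linear quotient map. Then the set of coinvariants ^{co H/B}H := {h ∈ H : (π ⊗ id)(Δ(h)) = π(1_H) ⊗ h} is a right coideal subalgebra of H: it is a subalgebra of H and Δ maps it into (^{co H/B}H) ⊗ H. -/
open TensorProduct

/-- The set of coinvariants `^{co H/B}H = {h ∈ H : (π ⊗ id)(Δ h) = π(1) ⊗ h}`,
where `π : H → H/B` is the canonical quotient map. -/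
noncomputable def coinvariants (k H : Type*) [Field k] [Ring H] [HopfAlgebra k H]
    (B : Submodule k H) : Set H :=
  {h : H | TensorProduct.map B.mkQ LinearMap.id (Coalgebra.comul (R := k) h)
    = B.mkQ 1 ⊗ₜ[k] h}

/-!
The coinvariants are the equalizer of the linear maps `(π ⊗ id) ∘ Δ` and `π(1) ⊗ -`. Tensoring
with the flat module `H` preserves this equalizer, and coassociativity says exactly that `Δ x`
equalizes the tensored maps whenever `x` is coinvariant; so the coinvariants form a right coideal.
They are closed under products because left multiplication by `H ⊗ H` descends to `H/B ⊗ H`: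
`(π ⊗ id)(Δ x * Δ y) = (π ⊗ id)(Δ x * (1 ⊗ y)) = (π(1) ⊗ x)(1 ⊗ y)`.
-/

section Coalgebra

variable {R C Q : Type*} [CommSemiring R] [AddCommMonoid C] [Module R C] [Coalgebra R C]
  [AddCommMonoid Q] [Module R Q]

/-- A right coideal of a coalgebra `C`: a submodule `V` with `Δ V ⊆ V ⊗ C`, where `V ⊗ C` is read
as its image in `C ⊗ C`. -/
def IsRightCoideal (V : Submodule R C) : Prop :=
  ∀ x ∈ V, Coalgebra.comul (R := R) x ∈ LinearMap.range (V.subtype.rTensor C)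

/-- The coinvariants `{c | (π ⊗ id)(Δ c) = q ⊗ c}` of a coalgebra `C` with respect to a linear map
`π : C → Q` and an element `q` of `Q`. For `π : H → H/B` and `q = π(1)` this is `^{co H/B}H`. -/
noncomputable def leftCoinvariants (π : C →ₗ[R] Q) (q : Q) : Submodule R C :=
  LinearMap.eqLocus (π.rTensor C ∘ₗ Coalgebra.comul) (TensorProduct.mk R Q C q)

theorem mem_leftCoinvariants {π : C →ₗ[R] Q} {q : Q} {c : C} :
    c ∈ leftCoinvariants π q ↔ π.rTensor C (Coalgebra.comul c) = q ⊗ₜ[R] c :=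
  Iff.rfl

theorem range_rTensor_subtype_eq_span {M N : Type*} [AddCommMonoid M] [AddCommMonoid N]
    [Module R M] [Module R N] (V : Submodule R M) :
    LinearMap.range (V.subtype.rTensor N) =
      Submodule.span R {z | ∃ v ∈ V, ∃ n : N, z = v ⊗ₜ[R] n} := by
  rw [LinearMap.rTensor, TensorProduct.range_map_eq_span_tmul]
  simp [eq_comm]

theorem assoc_rTensor_rTensor {M N P : Type*} [AddCommMonoid M] [AddCommMonoid N]
    [AddCommMonoid P] [Module R M] [Module R N] [Module R P] (f : M →ₗ[R] Q)
    (u : (M ⊗[R] N) ⊗[R] P) :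
    TensorProduct.assoc R Q N P ((f.rTensor N).rTensor P u) =
      f.rTensor (N ⊗[R] P) (TensorProduct.assoc R M N P u) := by
  simp [LinearMap.rTensor_tensor]

theorem assoc_mk_rTensor {M N : Type*} [AddCommMonoid M] [AddCommMonoid N]
    [Module R M] [Module R N] (q : Q) (u : M ⊗[R] N) :
    TensorProduct.assoc R Q M N ((TensorProduct.mk R Q M q).rTensor N u) = q ⊗ₜ[R] u := by
  induction u with
  | zero => simp
  | add u v hu hv => simp only [map_add, tmul_add, hu, hv]
  | tmul m n => simp

theorem rTensor_comul_eq_of_mem_leftCoinvariants {π : C →ₗ[R] Q} {q : Q} {x : C}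
    (hx : x ∈ leftCoinvariants π q) :
    (π.rTensor C ∘ₗ Coalgebra.comul).rTensor C (Coalgebra.comul x) =
      (TensorProduct.mk R Q C q).rTensor C (Coalgebra.comul x) := by
  apply (TensorProduct.assoc R Q C C).injective
  calc TensorProduct.assoc R Q C C
        ((π.rTensor C ∘ₗ Coalgebra.comul).rTensor C (Coalgebra.comul x))
    _ = π.rTensor (C ⊗[R] C) (Coalgebra.comul.lTensor C (Coalgebra.comul x)) := by
      rw [LinearMap.rTensor_comp_apply, assoc_rTensor_rTensor, Coalgebra.coassoc_apply]
    _ = Coalgebra.comul.lTensor Q (π.rTensor C (Coalgebra.comul x)) := by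
      rw [← LinearMap.comp_apply, LinearMap.rTensor_comp_lTensor,
        ← LinearMap.lTensor_comp_rTensor, LinearMap.comp_apply]
    _ = q ⊗ₜ[R] Coalgebra.comul x := by
      rw [mem_leftCoinvariants.1 hx, LinearMap.lTensor_tmul]
    _ = TensorProduct.assoc R Q C C
        ((TensorProduct.mk R Q C q).rTensor C (Coalgebra.comul x)) :=
      (assoc_mk_rTensor q _).symm

end Coalgebra

section Flat

variable {R : Type*} [CommRing R]

theorem eqLocus_rTensor_eq_range {M N P : Type*} [AddCommGroup M] [Module R M] [Module.Flat R M]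
    [AddCommGroup N] [Module R N] [AddCommGroup P] [Module R P] (f g : N →ₗ[R] P) :
    LinearMap.eqLocus (f.rTensor M) (g.rTensor M) =
      LinearMap.range ((LinearMap.eqLocus f g).subtype.rTensor M) := by
  rw [LinearMap.eqLocus_eq_ker_sub, LinearMap.eqLocus_eq_ker_sub, ← LinearMap.rTensor_sub]
  exact (Module.Flat.rTensor_exact M (LinearMap.exact_subtype_ker_map (f - g))).linearMap_ker_eq

theorem isRightCoideal_leftCoinvariants {C Q : Type*} [AddCommGroup C] [Module R C]
    [Coalgebra R C] [Module.Flat R C] [AddCommGroup Q] [Module R Q] (π : C →ₗ[R] Q) (q : Q) :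
    IsRightCoideal (leftCoinvariants π q) := fun _ hx =>
  (eqLocus_rTensor_eq_range _ _).le (rTensor_comul_eq_of_mem_leftCoinvariants hx)

end Flat

section LeftIdeal

theorem rTensor_mul_one_tmul {R A C Q : Type*} [CommSemiring R] [Semiring A] [Algebra R A]
    [Semiring C] [Algebra R C] [AddCommMonoid Q] [Module R Q] (π : A →ₗ[R] Q)
    (u : A ⊗[R] C) (c : C) :
    π.rTensor C (u * 1 ⊗ₜ[R] c) = (LinearMap.mulRight R c).lTensor Q (π.rTensor C u) := by
  induction u with
  | zero => simp
  | add u v hu hv => simp only [add_mul, map_add, hu, hv]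
  | tmul a b => simp

variable {R A C : Type*} [CommRing R] [Ring A] [Algebra R A] [Semiring C] [Algebra R C]
  {B : Submodule R A}

theorem mkQ_rTensor_tmul_mul (hB : ∀ a, ∀ b ∈ B, a * b ∈ B) (a : A) (c : C) (v : A ⊗[R] C) :
    B.mkQ.rTensor C (a ⊗ₜ[R] c * v) =
      TensorProduct.map (B.mapQ B (LinearMap.mulLeft R a) (hB a)) (LinearMap.mulLeft R c)
        (B.mkQ.rTensor C v) := by
  induction v with
  | zero => simp
  | add u v hu hv => simp only [mul_add, map_add, hu, hv]
  | tmul a' c' =>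
    rw [Algebra.TensorProduct.tmul_mul_tmul]
    rfl

theorem mkQ_rTensor_mul_congr (hB : ∀ a, ∀ b ∈ B, a * b ∈ B) (u : A ⊗[R] C) {v w : A ⊗[R] C}
    (hvw : B.mkQ.rTensor C v = B.mkQ.rTensor C w) :
    B.mkQ.rTensor C (u * v) = B.mkQ.rTensor C (u * w) := by
  induction u with
  | zero => simp
  | add u₁ u₂ h₁ h₂ => simp only [add_mul, map_add, h₁, h₂]
  | tmul a c => rw [mkQ_rTensor_tmul_mul hB, mkQ_rTensor_tmul_mul hB, hvw]

end LeftIdeal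

section Bialgebra

variable {R H : Type*} [CommRing R] [Ring H] [Bialgebra R H] {B : Submodule R H}

theorem one_mem_leftCoinvariants {Q : Type*} [AddCommMonoid Q] [Module R Q] (π : H →ₗ[R] Q) :
    1 ∈ leftCoinvariants π (π 1) := by
  rw [mem_leftCoinvariants, Bialgebra.comul_one, Algebra.TensorProduct.one_def,
    LinearMap.rTensor_tmul]

theorem mul_mem_leftCoinvariants_mkQ (hB : ∀ h, ∀ b ∈ B, h * b ∈ B) {x y : H}
    (hx : x ∈ leftCoinvariants B.mkQ (B.mkQ 1)) (hy : y ∈ leftCoinvariants B.mkQ (B.mkQ 1)) :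
    x * y ∈ leftCoinvariants B.mkQ (B.mkQ 1) := by
  rw [mem_leftCoinvariants] at hx hy ⊢
  calc B.mkQ.rTensor H (Coalgebra.comul (x * y))
    _ = B.mkQ.rTensor H (Coalgebra.comul x * Coalgebra.comul y) := by rw [Bialgebra.comul_mul]
    _ = B.mkQ.rTensor H (Coalgebra.comul x * 1 ⊗ₜ[R] y) := mkQ_rTensor_mul_congr hB _ hy
    _ = (LinearMap.mulRight R y).lTensor (H ⧸ B) (B.mkQ 1 ⊗ₜ[R] x) := by
      rw [rTensor_mul_one_tmul, hx]
    _ = B.mkQ 1 ⊗ₜ[R] (x * y) := rfl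

theorem stmt1_general [Module.Flat R H] (hB : ∀ h, ∀ b ∈ B, h * b ∈ B) :
    ∃ A : Subalgebra R H,
      (A : Set H) = {h | B.mkQ.rTensor H (Coalgebra.comul h) = B.mkQ 1 ⊗ₜ[R] h} ∧
      IsRightCoideal (Subalgebra.toSubmodule A) :=
  ⟨(leftCoinvariants B.mkQ (B.mkQ 1)).toSubalgebra (one_mem_leftCoinvariants B.mkQ)
    fun _ _ => mul_mem_leftCoinvariants_mkQ hB, rfl, isRightCoideal_leftCoinvariants _ _⟩

end Bialgebra

/-- if `B` is a left ideal coideal of a Hopf algebra `H`, then the set of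
coinvariants `{h ∈ H : (π ⊗ id)(Δ h) = π(1) ⊗ h}` (where `π : H → H/B` is the quotient map)
is a right coideal subalgebra of `H`: it is a subalgebra (contains `1`, closed under
multiplication, addition and scalar multiplication) and `Δ` maps it into itself tensor `H`. -/
theorem stmt1 (k H : Type*) [Field k] [Ring H] [HopfAlgebra k H]
    (B : Submodule k H)
    (hBideal : ∀ (h : H), ∀ b ∈ B, h * b ∈ B)
    (hBcoideal : ∀ b ∈ B, Coalgebra.comul (R := k) b ∈
      Submodule.span k {z : H ⊗[k] H | ∃ b' ∈ B, ∃ h : H, z = b' ⊗ₜ[k] h}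
      ⊔ Submodule.span k {z : H ⊗[k] H | ∃ h : H, ∃ b' ∈ B, z = h ⊗ₜ[k] b'})
    (hBcounit : ∀ b ∈ B, Coalgebra.counit (R := k) b = 0) :
    (1 : H) ∈ coinvariants k H B
    ∧ (∀ x ∈ coinvariants k H B, ∀ y ∈ coinvariants k H B, x * y ∈ coinvariants k H B)
    ∧ (∀ x ∈ coinvariants k H B, ∀ y ∈ coinvariants k H B, x + y ∈ coinvariants k H B)
    ∧ (∀ (c : k), ∀ x ∈ coinvariants k H B, c • x ∈ coinvariants k H B)
    ∧ (∀ x ∈ coinvariants k H B, Coalgebra.comul (R := k) x ∈ Submodule.span k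
        {z : H ⊗[k] H | ∃ a ∈ coinvariants k H B, ∃ h' : H, z = a ⊗ₜ[k] h'}) := by
  obtain ⟨A, hA : (A : Set H) = coinvariants k H B, hΔ⟩ := stmt1_general hBideal
  rw [← hA]
  exact ⟨A.one_mem, fun _ hx _ => A.mul_mem hx, fun _ hx _ => A.add_mem hx,
    fun c _ hx => A.smul_mem hx c,
    fun x hx => (range_rTensor_subtype_eq_span (Subalgebra.toSubmodule A)).le (hΔ x hx)⟩
end

section
/- Let H be a Hopf algebra over a field k and let A be a right H-comodule algebra with coaction ρ : A → A ⊗ H. Let I be a two-sided ideal of A possessing a unit e, i.e. x·e = x = e·x for all x ∈ I. Then the map ρ_I(x) := ρ(x)·(e ⊗ 1_H) takes values in I ⊗ H and defines a symmetric right partial coaction of H on I: for all x, y ∈ I, (PC1) (id ⊗ ε)(ρ_I(x)) = x; (PC2) ρ_I(x·y) = ρ_I(x)·ρ_I(y); (PC3) (ρ_I(e) ⊗ 1_H)·((id ⊗ Δ)(ρ_I(x))) = (ρ_I ⊗ id)(ρ_I(x)) = ((id ⊗ Δ)(ρ_I(x)))·(ρ_I(e) ⊗ 1_H). -/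
open TensorProduct LinearMap

/-!
The unit `e` of `I` is a central idempotent of `A`, so `e ⊗ 1` is one of `A ⊗ H`. Hence `ρ_I` is
multiplicative, and so is `ρ_I ⊗ id`. Coassociativity of `ρ` gives
`(ρ_I ⊗ id)(ρ x) = (id ⊗ Δ)(ρ_I x)`, so applying `ρ_I ⊗ id` to the two expressions
`ρ_I x = ρ(x)(e ⊗ 1) = (e ⊗ 1)ρ(x)` yields the two halves of (PC3).
-/

section Semigroup

variable {S : Type*} [Semigroup S]

theorem isMulCentral_of_ideal_unit {I : Set S} (hIl : ∀ a, ∀ x ∈ I, a * x ∈ I)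
    (hIr : ∀ a, ∀ x ∈ I, x * a ∈ I) {e : S} (heI : e ∈ I)
    (he : ∀ x ∈ I, x * e = x ∧ e * x = x) : IsMulCentral e :=
  Semigroup.mem_center_iff.2 fun a =>
    calc a * e = e * (a * e) := (he _ (hIl a e heI)).2.symm
      _ = e * a * e := (mul_assoc e a e).symm
      _ = e * a := (he _ (hIr a e heI)).1

end Semigroup

section TensorProduct

variable {k A B H : Type*} [CommSemiring k] [Semiring A] [Algebra k A] [Semiring B] [Algebra k B]
  [Semiring H] [Algebra k H]

theorem isMulCentral_tmul_one {a : A} (ha : IsMulCentral a) : IsMulCentral (a ⊗ₜ[k] (1 : H)) :=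
  Algebra.TensorProduct.includeLeft_map_center_le k A H ⟨a, ha, rfl⟩

theorem isIdempotentElem_tmul_one {a : A} (ha : IsIdempotentElem a) :
    IsIdempotentElem (a ⊗ₜ[k] (1 : H)) :=
  ha.map (Algebra.TensorProduct.includeLeft : A →ₐ[k] A ⊗[k] H)

theorem mulRight_tmul_one (a : A) :
    mulRight k (a ⊗ₜ[k] (1 : H)) = rTensor H (mulRight k a) := by
  rw [LinearMap.mulRight_tmul, mulRight_one]
  rfl

theorem lTensor_mul_tmul_one (f : H →ₗ[k] B) (z : A ⊗[k] H) (a : A) :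
    lTensor A f (z * a ⊗ₜ[k] (1 : H)) = lTensor A f z * a ⊗ₜ[k] (1 : B) := by
  simp only [← mulRight_apply (R := k), mulRight_tmul_one, ← LinearMap.comp_apply,
    lTensor_comp_rTensor, rTensor_comp_lTensor]

theorem rTensor_mulRight_comp (f : A →ₗ[k] B) (b : B) (z : A ⊗[k] H) :
    rTensor H (mulRight k b ∘ₗ f) z = rTensor H f z * b ⊗ₜ[k] (1 : H) := by
  rw [rTensor_comp_apply, ← mulRight_tmul_one, mulRight_apply]

theorem rTensor_map_mul {f : A →ₗ[k] B} (hf : ∀ x y, f (x * y) = f x * f y) (z w : A ⊗[k] H) :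
    rTensor H f (z * w) = rTensor H f z * rTensor H f w :=
  (LinearMap.map_mul_iff (rTensor H f)).2 (by ext; simp [hf]) z w

theorem mul_tmul_one_mem_span {I : Submodule k A} {e : A} (he : ∀ a, a * e ∈ I) (z : A ⊗[k] H) :
    z * e ⊗ₜ[k] (1 : H) ∈ Submodule.span k {z : A ⊗[k] H | ∃ i ∈ I, ∃ h : H, z = i ⊗ₜ[k] h} := by
  induction z with
  | zero => simp only [zero_mul, zero_mem]
  | tmul a h =>
    rw [Algebra.TensorProduct.tmul_mul_tmul, mul_one]
    exact Submodule.subset_span ⟨a * e, he a, h, rfl⟩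
  | add z w hz hw => simpa only [add_mul] using add_mem hz hw

end TensorProduct

section PartialCoaction

variable {k H A : Type*} [CommSemiring k] [Semiring H] [Algebra k H] [Semiring A] [Algebra k A]

/-- A symmetric right partial coaction of `H` on a two-sided ideal `I` of `A` with unit `e`. It is
encoded by a map `δ` on all of `A`, of which only the restriction to `I` matters, and `I ⊗ H` by
the span of the pure tensors `i ⊗ h` in `A ⊗ H`. -/
structure IsSymmetricPartialCoaction [CoalgebraStruct k H] (I : Submodule k A) (e : A)
    (δ : A →ₗ[k] A ⊗[k] H) : Prop where
  map_mem : ∀ x ∈ I, δ x ∈ Submodule.span k {z : A ⊗[k] H | ∃ i ∈ I, ∃ h : H, z = i ⊗ₜ[k] h}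
  counit : ∀ x ∈ I, TensorProduct.rid k A (lTensor A CoalgebraStruct.counit (δ x)) = x
  map_mul : ∀ x ∈ I, ∀ y ∈ I, δ (x * y) = δ x * δ y
  coassoc : ∀ x ∈ I,
    δ e ⊗ₜ[k] (1 : H) * (TensorProduct.assoc k A H H).symm (lTensor A CoalgebraStruct.comul (δ x))
        = rTensor H δ (δ x)
      ∧ rTensor H δ (δ x)
        = (TensorProduct.assoc k A H H).symm (lTensor A CoalgebraStruct.comul (δ x))
          * δ e ⊗ₜ[k] (1 : H)

/-- The map `ρ_I : x ↦ ρ(x)(e ⊗ 1)`, which restricts a coaction `ρ` of `H` on `A` to a partial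
coaction on an ideal `I` with unit `e`. It is taken on all of `A`, where the formula makes sense. -/
def restrictedCoaction (ρ : A →ₐ[k] A ⊗[k] H) (e : A) : A →ₗ[k] A ⊗[k] H :=
  mulRight k (e ⊗ₜ[k] (1 : H)) ∘ₗ ρ.toLinearMap

variable (ρ : A →ₐ[k] A ⊗[k] H)

theorem restrictedCoaction_apply (e x : A) :
    restrictedCoaction ρ e x = ρ x * e ⊗ₜ[k] (1 : H) :=
  rfl

theorem restrictedCoaction_mul {e : A} (hc : IsMulCentral e) (he : IsIdempotentElem e) (x y : A) :
    restrictedCoaction ρ e (x * y) = restrictedCoaction ρ e x * restrictedCoaction ρ e y := by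
  have e_comm : Commute (e ⊗ₜ[k] (1 : H)) (ρ y) := (isMulCentral_tmul_one hc).comm _
  simp only [restrictedCoaction_apply, map_mul, e_comm.mul_mul_mul_comm,
    (isIdempotentElem_tmul_one he).eq]

theorem rid_lTensor_restrictedCoaction (f : H →ₗ[k] k) (e x : A) :
    TensorProduct.rid k A (lTensor A f (restrictedCoaction ρ e x))
      = TensorProduct.rid k A (lTensor A f (ρ x)) * e := by
  rw [restrictedCoaction_apply, lTensor_mul_tmul_one]
  calc TensorProduct.rid k A (lTensor A f (ρ x) * e ⊗ₜ[k] (1 : k))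
      = TensorProduct.rid k A (lTensor A f (ρ x)) * TensorProduct.rid k A (e ⊗ₜ[k] (1 : k)) :=
        map_mul (Algebra.TensorProduct.rid k k A) _ _
    _ = TensorProduct.rid k A (lTensor A f (ρ x)) * e := by
        rw [TensorProduct.rid_tmul, one_smul]

theorem assoc_symm_lTensor_restrictedCoaction (f : H →ₗ[k] H ⊗[k] H) (e x : A) :
    (TensorProduct.assoc k A H H).symm (lTensor A f (restrictedCoaction ρ e x))
      = (TensorProduct.assoc k A H H).symm (lTensor A f (ρ x))
        * (e ⊗ₜ[k] (1 : H)) ⊗ₜ[k] (1 : H) := by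
  rw [restrictedCoaction_apply, lTensor_mul_tmul_one]
  exact map_mul (Algebra.TensorProduct.assoc k k k A H H).symm _ _

variable {ρ} [CoalgebraStruct k H]

theorem rTensor_restrictedCoaction {x : A}
    (hx : rTensor H ρ.toLinearMap (ρ x)
      = (TensorProduct.assoc k A H H).symm (lTensor A CoalgebraStruct.comul (ρ x))) (e : A) :
    rTensor H (restrictedCoaction ρ e) (ρ x)
      = (TensorProduct.assoc k A H H).symm
          (lTensor A CoalgebraStruct.comul (restrictedCoaction ρ e x)) := by
  rw [assoc_symm_lTensor_restrictedCoaction, ← hx, restrictedCoaction, rTensor_mulRight_comp]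

theorem restrictedCoaction_coassoc {e : A} (hc : IsMulCentral e) (he : IsIdempotentElem e) {x : A}
    (hx : rTensor H ρ.toLinearMap (ρ x)
      = (TensorProduct.assoc k A H H).symm (lTensor A CoalgebraStruct.comul (ρ x))) :
    restrictedCoaction ρ e e ⊗ₜ[k] (1 : H) * (TensorProduct.assoc k A H H).symm
          (lTensor A CoalgebraStruct.comul (restrictedCoaction ρ e x))
        = rTensor H (restrictedCoaction ρ e) (restrictedCoaction ρ e x)
      ∧ rTensor H (restrictedCoaction ρ e) (restrictedCoaction ρ e x)
        = (TensorProduct.assoc k A H H).symm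
            (lTensor A CoalgebraStruct.comul (restrictedCoaction ρ e x))
          * restrictedCoaction ρ e e ⊗ₜ[k] (1 : H) := by
  have hmul := rTensor_map_mul (H := H) (restrictedCoaction_mul ρ hc he)
  have e_comm : e ⊗ₜ[k] (1 : H) * ρ x = ρ x * e ⊗ₜ[k] (1 : H) := (isMulCentral_tmul_one hc).comm _
  rw [← rTensor_restrictedCoaction hx e, ← rTensor_tmul, ← hmul, ← hmul, e_comm]
  exact ⟨rfl, rfl⟩

end PartialCoaction

theorem stmt3_general {k H A : Type*} [CommSemiring k] [Semiring H] [Algebra k H]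
    [CoalgebraStruct k H] [Semiring A] [Algebra k A] (ρ : A →ₐ[k] A ⊗[k] H)
    (hcounital : ∀ a, TensorProduct.rid k A (lTensor A CoalgebraStruct.counit (ρ a)) = a)
    (hcoassoc : ∀ a, rTensor H ρ.toLinearMap (ρ a)
      = (TensorProduct.assoc k A H H).symm (lTensor A CoalgebraStruct.comul (ρ a)))
    (I : Submodule k A) (hIl : ∀ a, ∀ x ∈ I, a * x ∈ I) (hIr : ∀ a, ∀ x ∈ I, x * a ∈ I)
    (e : A) (heI : e ∈ I) (he : ∀ x ∈ I, x * e = x ∧ e * x = x) :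
    IsSymmetricPartialCoaction I e (restrictedCoaction ρ e) := by
  have e_central : IsMulCentral e := isMulCentral_of_ideal_unit (I := I) hIl hIr heI he
  have e_idem : IsIdempotentElem e := (he e heI).1
  exact
    { map_mem := fun x _ => mul_tmul_one_mem_span (fun a => hIl a e heI) (ρ x)
      counit := fun x hx => by rw [rid_lTensor_restrictedCoaction, hcounital, (he x hx).1]
      map_mul := fun x _ y _ => restrictedCoaction_mul ρ e_central e_idem x y
      coassoc := fun x _ => restrictedCoaction_coassoc e_central e_idem (hcoassoc x) }

/-- if `A` is a right `H`-comodule algebra with coaction `ρ` and `I` is a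
two-sided ideal of `A` with a unit `e`, then `ρ_I(x) := ρ(x)·(e ⊗ 1)` takes values in
`I ⊗ H` and is a symmetric right partial coaction of `H` on `I` (axioms (PC1)-(PC3)). -/
theorem stmt3 (k H A : Type*) [Field k] [Ring H] [HopfAlgebra k H]
    [Ring A] [Algebra k A]
    (ρ : A →ₐ[k] A ⊗[k] H)
    (hcounital : ∀ a : A,
      (TensorProduct.rid k A) ((LinearMap.lTensor A (Coalgebra.counit (R := k))) (ρ a)) = a)
    (hcoassoc : ∀ a : A,
      (LinearMap.rTensor H ρ.toLinearMap) (ρ a)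
        = (TensorProduct.assoc k A H H).symm
            ((LinearMap.lTensor A (Coalgebra.comul (R := k))) (ρ a)))
    (I : Submodule k A)
    (hIl : ∀ (a : A), ∀ x ∈ I, a * x ∈ I)
    (hIr : ∀ (a : A), ∀ x ∈ I, x * a ∈ I)
    (e : A) (heI : e ∈ I)
    (he : ∀ x ∈ I, x * e = x ∧ e * x = x) :
    -- `ρ_I` takes values in `I ⊗ H`
    (∀ x ∈ I, ρ x * (e ⊗ₜ[k] (1 : H)) ∈
      Submodule.span k {z : A ⊗[k] H | ∃ i ∈ I, ∃ h : H, z = i ⊗ₜ[k] h})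
    -- (PC1)
    ∧ (∀ x ∈ I,
      (TensorProduct.rid k A) ((LinearMap.lTensor A (Coalgebra.counit (R := k)))
        (ρ x * (e ⊗ₜ[k] (1 : H)))) = x)
    -- (PC2)
    ∧ (∀ x ∈ I, ∀ y ∈ I,
      ρ (x * y) * (e ⊗ₜ[k] (1 : H)) = (ρ x * (e ⊗ₜ[k] (1 : H))) * (ρ y * (e ⊗ₜ[k] (1 : H))))
    -- (PC3): (ρ_I(e) ⊗ 1)·((id ⊗ Δ)(ρ_I x)) = (ρ_I ⊗ id)(ρ_I x) = ((id ⊗ Δ)(ρ_I x))·(ρ_I(e) ⊗ 1)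
    ∧ (∀ x ∈ I,
      ((ρ e * (e ⊗ₜ[k] (1 : H))) ⊗ₜ[k] (1 : H))
          * ((TensorProduct.assoc k A H H).symm
              ((LinearMap.lTensor A (Coalgebra.comul (R := k))) (ρ x * (e ⊗ₜ[k] (1 : H)))))
        = (LinearMap.rTensor H
            ((LinearMap.mulRight k (e ⊗ₜ[k] (1 : H))).comp ρ.toLinearMap))
            (ρ x * (e ⊗ₜ[k] (1 : H)))
      ∧ (LinearMap.rTensor H
            ((LinearMap.mulRight k (e ⊗ₜ[k] (1 : H))).comp ρ.toLinearMap))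
            (ρ x * (e ⊗ₜ[k] (1 : H)))
        = ((TensorProduct.assoc k A H H).symm
              ((LinearMap.lTensor A (Coalgebra.comul (R := k))) (ρ x * (e ⊗ₜ[k] (1 : H)))))
          * ((ρ e * (e ⊗ₜ[k] (1 : H))) ⊗ₜ[k] (1 : H))) := by
  have h := stmt3_general ρ hcounital hcoassoc I hIl hIr e heI he
  exact ⟨h.map_mem, h.counit, h.map_mul, h.coassoc⟩
end

section
/- Let H be a Hopf algebra over a field k and let e ∈ H be a subcentral idempotent. Let H·e = {h·e : h ∈ H} be the left ideal generated by e. Then the k-linear map ρ_e : H·e → (H·e) ⊗ H defined by ρ_e(x) = x_{(1)}·e ⊗ x_{(2)} is well defined (ρ_e(x) ∈ (H·e) ⊗ H) and is a right partial H-comodule structure on H·e, i.e. it satisfies axioms (PCM1), (PCM2) and (PCM3). -/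
open TensorProduct LinearMap

variable (k H : Type*) [Field k] [Ring H] [HopfAlgebra k H]

/-- The map `ρ_e : x ↦ x₍₁₎·e ⊗ x₍₂₎`, as a linear endomap of the ambient space;
the claim of the theorem is that it restricts to a partial comodule structure on `H·e`. -/
noncomputable def rhoE (e : H) : H →ₗ[k] H ⊗[k] H :=
  (LinearMap.mulRight k (e ⊗ₜ[k] (1 : H))).comp (Coalgebra.comul (R := k))

/-- `ρ² = (ρ ⊗ id) ∘ ρ`, giving `m⁽⁰⁾⁽⁰⁾ ⊗ m⁽⁰⁾⁽¹⁾ ⊗ m⁽¹⁾`. -/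
noncomputable def rhoE2 (e : H) : H →ₗ[k] (H ⊗[k] H) ⊗[k] H :=
  (LinearMap.rTensor H (rhoE k H e)).comp (rhoE k H e)

/-- `ρ³ = (ρ ⊗ id ⊗ id) ∘ ρ²`, giving `m⁽⁰⁾⁽⁰⁾⁽⁰⁾ ⊗ m⁽⁰⁾⁽⁰⁾⁽¹⁾ ⊗ m⁽⁰⁾⁽¹⁾ ⊗ m⁽¹⁾`. -/
noncomputable def rhoE3 (e : H) : H →ₗ[k] ((H ⊗[k] H) ⊗[k] H) ⊗[k] H :=
  (LinearMap.rTensor H (LinearMap.rTensor H (rhoE k H e))).comp (rhoE2 k H e)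

/-- `(a ⊗ b) ⊗ c ↦ (a ⊗ b₍₁₎) ⊗ b₍₂₎·S(c)` : the left-hand side operation of (PCM2). -/
noncomputable def pcm2L : (H ⊗[k] H) ⊗[k] H →ₗ[k] (H ⊗[k] H) ⊗[k] H :=
  (LinearMap.lTensor (H ⊗[k] H) (LinearMap.mul' k H))
    ∘ₗ (TensorProduct.assoc k (H ⊗[k] H) H H).toLinearMap
    ∘ₗ (LinearMap.rTensor H ((TensorProduct.assoc k H H H).symm.toLinearMap))
    ∘ₗ (LinearMap.lTensor (H ⊗[k] (H ⊗[k] H)) (HopfAlgebra.antipode (R := k)))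
    ∘ₗ (LinearMap.rTensor H (LinearMap.lTensor H (Coalgebra.comul (R := k))))

/-- `((a ⊗ b) ⊗ c) ⊗ d ↦ (a ⊗ b) ⊗ c·S(d)` : the right-hand side operation of (PCM2). -/
noncomputable def pcm2R : ((H ⊗[k] H) ⊗[k] H) ⊗[k] H →ₗ[k] (H ⊗[k] H) ⊗[k] H :=
  (LinearMap.lTensor (H ⊗[k] H) (LinearMap.mul' k H))
    ∘ₗ (TensorProduct.assoc k (H ⊗[k] H) H H).toLinearMap
    ∘ₗ (LinearMap.lTensor ((H ⊗[k] H) ⊗[k] H) (HopfAlgebra.antipode (R := k)))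

/-- `(a ⊗ b) ⊗ c ↦ (a ⊗ b·S(c₍₁₎)) ⊗ c₍₂₎` : the left-hand side operation of (PCM3). -/
noncomputable def pcm3L : (H ⊗[k] H) ⊗[k] H →ₗ[k] (H ⊗[k] H) ⊗[k] H :=
  (LinearMap.rTensor H (LinearMap.lTensor H (LinearMap.mul' k H)))
    ∘ₗ (LinearMap.rTensor H (TensorProduct.assoc k H H H).toLinearMap)
    ∘ₗ (TensorProduct.assoc k (H ⊗[k] H) H H).symm.toLinearMap
    ∘ₗ (LinearMap.lTensor (H ⊗[k] H) (LinearMap.rTensor H (HopfAlgebra.antipode (R := k))))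
    ∘ₗ (LinearMap.lTensor (H ⊗[k] H) (Coalgebra.comul (R := k)))

/-- `((a ⊗ b) ⊗ c) ⊗ d ↦ (a ⊗ b·S(c)) ⊗ d` : the right-hand side operation of (PCM3). -/
noncomputable def pcm3R : ((H ⊗[k] H) ⊗[k] H) ⊗[k] H →ₗ[k] (H ⊗[k] H) ⊗[k] H :=
  LinearMap.rTensor H
    ((LinearMap.lTensor H (LinearMap.mul' k H))
      ∘ₗ (TensorProduct.assoc k H H H).toLinearMap
      ∘ₗ (LinearMap.lTensor (H ⊗[k] H) (HopfAlgebra.antipode (R := k))))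

/-- `m⁽⁰⁾ ⊗ m⁽¹⁾ ↦ m⁽⁰⁾·ε(m⁽¹⁾)`. -/
noncomputable def applyCounit : H ⊗[k] H →ₗ[k] H :=
  (TensorProduct.rid k H).toLinearMap ∘ₗ (LinearMap.lTensor H (Coalgebra.counit (R := k)))

/-!
Contracting two tensor legs by `c ⊗ d ↦ c·S(d)` turns right multiplication by `Δ p` into right
multiplication by `ε p`, because `c·p₍₁₎·S(d·p₍₂₎) = c·p₍₁₎·S(p₍₂₎)·S(d) = ε(p)·c·S(d)`.
With `Δ₂ = (Δ ⊗ id)Δ` and `Δ₃ = (Δ ⊗ id ⊗ id)Δ₂`, one has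

* `ρ² x = Δ₂ x·(Δ e ⊗ 1)·(e ⊗ 1 ⊗ 1)`,
* `ρ³ x = Δ₃ x·(Δ₂ e ⊗ 1)·(Δ e ⊗ 1 ⊗ 1)·(e ⊗ 1 ⊗ 1 ⊗ 1)`.

In (PCM2) the right-hand side has the extra factor `Δ e ⊗ 1 ⊗ 1`, which contracts to the same
element as `Δ₃ e`. Since `x = x·e`, a factor `Δ₃ e` splits off from `Δ₃ x`, and subcentrality moves
it past `Δ₂ e ⊗ 1`. In (PCM3) the extra factor is `Δ₂ e ⊗ 1`; subcentrality moves it past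
`Δ e ⊗ 1 ⊗ 1`, where it contracts to `e ⊗ 1 ⊗ 1` and is absorbed because `e² = e`.
-/

lemma rTensor_mulRight {R A B : Type*} [CommSemiring R] [Semiring A] [Algebra R A] [Semiring B]
    [Algebra R B] (a : A) (z : A ⊗[R] B) : rTensor B (mulRight R a) z = z * (a ⊗ₜ 1) := by
  rw [← mulRight_apply R (a ⊗ₜ[R] (1 : B)) z, mulRight_tmul, mulRight_one, rTensor]

section Coalgebra

open Coalgebra

variable {R C M N : Type*} [CommSemiring R] [AddCommMonoid C] [Module R C] [Coalgebra R C]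
  [AddCommMonoid M] [Module R M] [AddCommMonoid N] [Module R N]

/-- Comultiplication of the last tensor leg, `m ⊗ c ↦ (m ⊗ c₍₁₎) ⊗ c₍₂₎`. Tensor products are kept
bracketed to the left, as they arise by iterating a right coaction. -/
noncomputable def comulRight : M ⊗[R] C →ₗ[R] (M ⊗[R] C) ⊗[R] C :=
  (TensorProduct.assoc R M C C).symm.toLinearMap ∘ₗ lTensor M comul

/-- Counit on the last tensor leg, `m ⊗ c ↦ ε(c)·m`. -/
noncomputable def counitRight : M ⊗[R] C →ₗ[R] M :=
  (TensorProduct.rid R M).toLinearMap ∘ₗ lTensor M counit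

lemma comulRight_tmul (m : M) (c : C) :
    comulRight (m ⊗ₜ[R] c) = (TensorProduct.assoc R M C C).symm (m ⊗ₜ comul c) :=
  rfl

lemma counitRight_tmul (m : M) (c : C) : counitRight (m ⊗ₜ[R] c) = counit (R := R) c • m :=
  rfl

lemma comulRight_rTensor (f : M →ₗ[R] N) (y : M ⊗[R] C) :
    comulRight (rTensor C f y) = rTensor C (rTensor C f) (comulRight y) := by
  induction y with
  | zero => simp only [map_zero]
  | add y y' hy hy' => simp only [map_add, hy, hy']
  | tmul m c =>
    rw [rTensor_tmul, comulRight_tmul, comulRight_tmul]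
    induction comul (R := R) c with
    | zero => simp only [map_zero, tmul_zero]
    | add t t' ht ht' => simp only [map_add, tmul_add, ht, ht']
    | tmul c₁ c₂ => simp only [TensorProduct.assoc_symm_tmul, rTensor_tmul]

lemma counitRight_rTensor (f : M →ₗ[R] N) (y : M ⊗[R] C) :
    counitRight (rTensor C f y) = f (counitRight y) := by
  induction y with
  | zero => simp only [map_zero]
  | add y y' hy hy' => simp only [map_add, hy, hy']
  | tmul m c => simp only [rTensor_tmul, counitRight_tmul, map_smul]

lemma counitRight_comul (c : C) : counitRight (comul (R := R) c) = c := by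
  simp only [counitRight, LinearMap.comp_apply, lTensor_counit_comul, LinearEquiv.coe_coe,
    TensorProduct.rid_tmul, one_smul]

end Coalgebra

section Bialgebra

open Coalgebra Bialgebra

variable {R A P : Type*} [CommSemiring R] [Semiring A] [Bialgebra R A] [Semiring P] [Algebra R P]

variable (R A P) in
/-- `comulRight` as an algebra homomorphism, for a bialgebra `A` and an algebra `P` as the first
tensor factor. -/
noncomputable def comulRightAlgHom : P ⊗[R] A →ₐ[R] (P ⊗[R] A) ⊗[R] A :=
  (Algebra.TensorProduct.assoc R R R P A A).symm.toAlgHom.comp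
    (Algebra.TensorProduct.lTensor P (comulAlgHom R A))

lemma comulRight_mul (y z : P ⊗[R] A) : comulRight (y * z) = comulRight y * comulRight z :=
  map_mul (comulRightAlgHom R A P) y z

lemma rTensor_comulRight_mul (y z : (P ⊗[R] A) ⊗[R] A) :
    rTensor A comulRight (y * z) = rTensor A comulRight y * rTensor A comulRight z :=
  map_mul (Algebra.TensorProduct.rTensor A (comulRightAlgHom R A P)) y z

lemma comulRight_tmul_one (p : P) : comulRight (p ⊗ₜ[R] (1 : A)) = (p ⊗ₜ 1) ⊗ₜ 1 := by
  rw [comulRight_tmul, comul_one, Algebra.TensorProduct.one_def, TensorProduct.assoc_symm_tmul]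

lemma counitRight_mul_tmul_one (y : P ⊗[R] A) (p : P) :
    counitRight (y * (p ⊗ₜ 1)) = counitRight y * p := by
  induction y with
  | zero => simp only [map_zero, zero_mul]
  | add y y' hy hy' => simp only [map_add, add_mul, hy, hy']
  | tmul q a =>
    simp only [Algebra.TensorProduct.tmul_mul_tmul, mul_one, counitRight_tmul, smul_mul_assoc]

variable (R A)

/-- The iterated comultiplication `Δ₂ = (Δ ⊗ id) ∘ Δ`. -/
noncomputable def comul₂ : A →ₐ[R] (A ⊗[R] A) ⊗[R] A :=
  (Algebra.TensorProduct.rTensor A (comulAlgHom R A)).comp (comulAlgHom R A)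

/-- The iterated comultiplication `Δ₃ = (Δ ⊗ id ⊗ id) ∘ Δ₂`. -/
noncomputable def comul₃ : A →ₐ[R] ((A ⊗[R] A) ⊗[R] A) ⊗[R] A :=
  (Algebra.TensorProduct.rTensor A (Algebra.TensorProduct.rTensor A (comulAlgHom R A))).comp
    (comul₂ R A)

variable {R A}

lemma rTensor_comul_comul (a : A) : rTensor A comul (comul (R := R) a) = comul₂ R A a :=
  rfl

lemma rTensor_rTensor_comul_comul₂ (a : A) :
    rTensor A (rTensor A comul) (comul₂ R A a) = comul₃ R A a :=
  rfl

lemma rTensor_comul₂_comul (a : A) :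
    rTensor A (comul₂ R A).toLinearMap (comul a) = comul₃ R A a := by
  rw [← rTensor_rTensor_comul_comul₂, ← rTensor_comul_comul, ← rTensor_comp_apply]
  rfl

lemma comulRight_comul (a : A) : comulRight (comul (R := R) a) = comul₂ R A a :=
  coassoc_symm_apply a

lemma comulRight_comul₂ (a : A) : comulRight (comul₂ R A a) = comul₃ R A a := by
  rw [← rTensor_comul_comul, comulRight_rTensor, comulRight_comul, rTensor_rTensor_comul_comul₂]

lemma rTensor_comulRight_comul₂ (a : A) : rTensor A comulRight (comul₂ R A a) = comul₃ R A a := by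
  have hcomp : comulRight ∘ₗ comul = (comul₂ R A).toLinearMap := LinearMap.ext comulRight_comul
  rw [← rTensor_comul_comul, ← rTensor_comp_apply, hcomp, rTensor_comul₂_comul]

lemma counitRight_comul₂ (a : A) : counitRight (comul₂ R A a) = comul a := by
  rw [← rTensor_comul_comul, counitRight_rTensor, counitRight_comul]

variable (R) in
/-- The map `ρ_e : x ↦ x₍₁₎·e ⊗ x₍₂₎` on a bialgebra over any commutative semiring; for `e` a
subcentral idempotent of a Hopf algebra, `stmt6_general` shows that it is a partial coaction
on `A·e`. -/
noncomputable def partialCoaction (e : A) : A →ₗ[R] A ⊗[R] A :=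
  mulRight R (e ⊗ₜ 1) ∘ₗ comul

lemma partialCoaction_apply (e x : A) : partialCoaction R e x = comul x * (e ⊗ₜ 1) :=
  rfl

lemma rTensor_partialCoaction (e : A) (t : A ⊗[R] A) :
    rTensor A (partialCoaction R e) t =
      Algebra.TensorProduct.rTensor A (comulAlgHom R A) t * ((e ⊗ₜ 1) ⊗ₜ 1) := by
  rw [partialCoaction, rTensor_comp_apply, rTensor_mulRight]
  rfl

lemma rTensor_rTensor_partialCoaction (e : A) (t : (A ⊗[R] A) ⊗[R] A) :
    rTensor A (rTensor A (partialCoaction R e)) t =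
      Algebra.TensorProduct.rTensor A (Algebra.TensorProduct.rTensor A (comulAlgHom R A)) t *
        (((e ⊗ₜ 1) ⊗ₜ 1) ⊗ₜ 1) := by
  have hcomp : rTensor A (partialCoaction R e) =
      mulRight R ((e ⊗ₜ[R] (1 : A)) ⊗ₜ[R] (1 : A)) ∘ₗ
        (Algebra.TensorProduct.rTensor A (comulAlgHom R A)).toLinearMap :=
    LinearMap.ext (rTensor_partialCoaction e)
  rw [hcomp, rTensor_comp_apply, rTensor_mulRight]
  rfl

lemma partialCoaction_sq (e x : A) :
    rTensor A (partialCoaction R e) (partialCoaction R e x) =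
      comul₂ R A x * (comul e ⊗ₜ 1) * ((e ⊗ₜ 1) ⊗ₜ 1) := by
  rw [rTensor_partialCoaction, partialCoaction_apply, map_mul]
  rfl

lemma partialCoaction_cube (e x : A) :
    rTensor A (rTensor A (partialCoaction R e))
        (rTensor A (partialCoaction R e) (partialCoaction R e x)) =
      comul₃ R A x * (comul₂ R A e ⊗ₜ 1) * ((comul e ⊗ₜ 1) ⊗ₜ 1) * (((e ⊗ₜ 1) ⊗ₜ 1) ⊗ₜ 1) := by
  rw [rTensor_rTensor_partialCoaction, partialCoaction_sq, map_mul, map_mul]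
  rfl

lemma rTensor_comulRight_partialCoaction_sq (e x : A) :
    rTensor A comulRight (rTensor A (partialCoaction R e) (partialCoaction R e x)) =
      comul₃ R A x * (comul₂ R A e ⊗ₜ 1) * (((e ⊗ₜ 1) ⊗ₜ 1) ⊗ₜ 1) := by
  rw [partialCoaction_sq, rTensor_comulRight_mul, rTensor_comulRight_mul, rTensor_comulRight_comul₂,
    rTensor_tmul, rTensor_tmul, comulRight_comul, comulRight_tmul_one]

lemma comulRight_partialCoaction_sq (e x : A) :
    comulRight (rTensor A (partialCoaction R e) (partialCoaction R e x)) =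
      comul₃ R A x * ((comul e ⊗ₜ 1) ⊗ₜ 1) * (((e ⊗ₜ 1) ⊗ₜ 1) ⊗ₜ 1) := by
  rw [partialCoaction_sq, comulRight_mul, comulRight_mul, comulRight_comul₂, comulRight_tmul_one,
    comulRight_tmul_one]

lemma commute_comul_tmul_one_comul₂ {e : A} (hsub : Commute (e ⊗ₜ[R] (1 : A)) (comul e)) :
    Commute (comul (R := R) e ⊗ₜ[R] (1 : A)) (comul₂ R A e) :=
  hsub.map (Algebra.TensorProduct.rTensor A (comulAlgHom R A))

lemma commute_comul₂_tmul_one_comul₃ {e : A} (hsub : Commute (e ⊗ₜ[R] (1 : A)) (comul e)) :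
    Commute (comul₂ R A e ⊗ₜ[R] (1 : A)) (comul₃ R A e) :=
  (commute_comul_tmul_one_comul₂ hsub).map
    (Algebra.TensorProduct.rTensor A (Algebra.TensorProduct.rTensor A (comulAlgHom R A)))

lemma partialCoaction_mem_span (e x : A) :
    partialCoaction R e x ∈ Submodule.span R
      {z | ∃ n ∈ range (mulRight R e), ∃ a : A, z = n ⊗ₜ[R] a} := by
  rw [partialCoaction_apply]
  induction comul (R := R) x with
  | zero => rw [zero_mul]; exact zero_mem _
  | add t t' ht ht' => rw [add_mul]; exact add_mem ht ht'
  | tmul a b =>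
    rw [Algebra.TensorProduct.tmul_mul_tmul, mul_one]
    exact Submodule.subset_span ⟨a * e, ⟨a, rfl⟩, b, rfl⟩

lemma counitRight_partialCoaction (e x : A) : counitRight (partialCoaction R e x) = x * e := by
  rw [partialCoaction_apply, counitRight_mul_tmul_one, counitRight_comul]

end Bialgebra

section HopfAlgebra

open Coalgebra Bialgebra HopfAlgebra

variable {R A M P : Type*} [CommSemiring R] [Semiring A] [HopfAlgebra R A]
  [AddCommMonoid M] [Module R M] [Semiring P] [Algebra R P]

/-- Contraction of the last two tensor legs, `(m ⊗ c) ⊗ d ↦ m ⊗ c·S(d)`. -/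
noncomputable def mulAntipodeRight : (M ⊗[R] A) ⊗[R] A →ₗ[R] M ⊗[R] A :=
  lTensor M (mul' R A) ∘ₗ (TensorProduct.assoc R M A A).toLinearMap ∘ₗ
    lTensor (M ⊗[R] A) (antipode R)

lemma mulAntipodeRight_tmul_tmul (m : M) (c d : A) :
    mulAntipodeRight ((m ⊗ₜ[R] c) ⊗ₜ[R] d) = m ⊗ₜ (c * antipode R d) :=
  rfl

lemma mulAntipodeRight_tmul_mul_assoc_symm (q p : P) (c d : A) (t : A ⊗[R] A) :
    mulAntipodeRight ((q ⊗ₜ c) ⊗ₜ d * (TensorProduct.assoc R P A A).symm (p ⊗ₜ t)) =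
      (q * p) ⊗ₜ (c * mul' R A (lTensor A (antipode R) t) * antipode R d) := by
  induction t with
  | zero => simp only [tmul_zero, map_zero, mul_zero, zero_mul]
  | add t t' ht ht' => simp only [tmul_add, map_add, mul_add, add_mul, ht, ht']
  | tmul a b =>
    simp only [TensorProduct.assoc_symm_tmul, Algebra.TensorProduct.tmul_mul_tmul,
      mulAntipodeRight_tmul_tmul, antipode_mul_antidistrib, lTensor_tmul, mul'_apply, mul_assoc]

lemma mulAntipodeRight_tmul_mul_comulRight_tmul (q p : P) (c d a : A) :
    mulAntipodeRight ((q ⊗ₜ[R] c) ⊗ₜ[R] d * comulRight (p ⊗ₜ a)) =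
      mulAntipodeRight ((q ⊗ₜ c) ⊗ₜ d) * (counitRight (p ⊗ₜ[R] a) ⊗ₜ 1) := by
  rw [comulRight_tmul, mulAntipodeRight_tmul_mul_assoc_symm,
    mul_antipode_lTensor_comul_apply, Algebra.algebraMap_eq_smul_one,
    mulAntipodeRight_tmul_tmul, counitRight_tmul]
  simp only [mul_smul_comm, smul_mul_assoc, mul_one, Algebra.TensorProduct.tmul_mul_tmul,
    tmul_smul, smul_tmul']

theorem mulAntipodeRight_mul_comulRight (z : (P ⊗[R] A) ⊗[R] A) (y : P ⊗[R] A) :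
    mulAntipodeRight (z * comulRight y) = mulAntipodeRight z * (counitRight y ⊗ₜ 1) := by
  induction y with
  | zero => simp only [map_zero, mul_zero, zero_tmul]
  | add y y' hy hy' => simp only [map_add, mul_add, add_tmul, hy, hy']
  | tmul p a =>
    induction z with
    | zero => simp only [map_zero, zero_mul]
    | add z z' hz hz' => simp only [map_add, add_mul, hz, hz']
    | tmul w d =>
      induction w with
      | zero => simp only [map_zero, zero_mul, zero_tmul]
      | add w w' hw hw' => simp only [map_add, add_mul, add_tmul, hw, hw']
      | tmul q c => exact mulAntipodeRight_tmul_mul_comulRight_tmul q p c d a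

lemma mulAntipodeRight_mul_tmul_one (z : (P ⊗[R] A) ⊗[R] A) (p : P) :
    mulAntipodeRight (z * ((p ⊗ₜ 1) ⊗ₜ 1)) = mulAntipodeRight z * (p ⊗ₜ 1) := by
  simpa only [comulRight_tmul_one, counitRight_tmul, counit_one, one_smul] using
    mulAntipodeRight_mul_comulRight z (p ⊗ₜ 1)

lemma rTensor_mulAntipodeRight_mul_comulRight (z : ((P ⊗[R] A) ⊗[R] A) ⊗[R] A) (y : P ⊗[R] A) :
    rTensor A mulAntipodeRight (z * (comulRight y ⊗ₜ 1)) =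
      rTensor A mulAntipodeRight z * ((counitRight y ⊗ₜ 1) ⊗ₜ 1) := by
  have hcomp : mulAntipodeRight ∘ₗ mulRight R (comulRight y) =
      mulRight R (counitRight y ⊗ₜ 1) ∘ₗ mulAntipodeRight :=
    LinearMap.ext fun z ↦ mulAntipodeRight_mul_comulRight z y
  rw [← rTensor_mulRight, ← rTensor_comp_apply, hcomp, rTensor_comp_apply, rTensor_mulRight]

lemma rTensor_mulAntipodeRight_mul_tmul_one (z : ((P ⊗[R] A) ⊗[R] A) ⊗[R] A) (p : P) :
    rTensor A mulAntipodeRight (z * (((p ⊗ₜ 1) ⊗ₜ 1) ⊗ₜ 1)) =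
      rTensor A mulAntipodeRight z * ((p ⊗ₜ 1) ⊗ₜ 1) := by
  simpa only [comulRight_tmul_one, counitRight_tmul, counit_one, one_smul] using
    rTensor_mulAntipodeRight_mul_comulRight z (p ⊗ₜ 1)

lemma rTensor_mulAntipodeRight_mul_comul₂ (z : ((A ⊗[R] A) ⊗[R] A) ⊗[R] A) (a : A) :
    rTensor A mulAntipodeRight (z * (comul₂ R A a ⊗ₜ 1)) =
      rTensor A mulAntipodeRight z * ((a ⊗ₜ 1) ⊗ₜ 1) := by
  rw [← comulRight_comul, rTensor_mulAntipodeRight_mul_comulRight, counitRight_comul]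

/-- A linear map `ρ : M → M ⊗ A` is a partial coaction of the Hopf algebra `A` on the submodule `N`
if it maps `N` into `N ⊗ A`, taken as a submodule of `M ⊗ A`, and the axioms (PCM1), (PCM2) and
(PCM3) of a right partial comodule hold on `N`. -/
structure IsPartialCoactionOn (ρ : M →ₗ[R] M ⊗[R] A) (N : Submodule R M) : Prop where
  mem_span : ∀ m ∈ N, ρ m ∈ Submodule.span R {z | ∃ n ∈ N, ∃ a : A, z = n ⊗ₜ[R] a}
  counit : ∀ m ∈ N, counitRight (ρ m) = m
  comul_left : ∀ m ∈ N,
    mulAntipodeRight (rTensor A comulRight (rTensor A ρ (ρ m))) =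
      mulAntipodeRight (rTensor A (rTensor A ρ) (rTensor A ρ (ρ m)))
  comul_right : ∀ m ∈ N,
    rTensor A mulAntipodeRight (comulRight (rTensor A ρ (ρ m))) =
      rTensor A mulAntipodeRight (rTensor A (rTensor A ρ) (rTensor A ρ (ρ m)))

lemma mulAntipodeRight_comul₃_mul_comul {e x : A} (hsub : Commute (e ⊗ₜ[R] (1 : A)) (comul e))
    (hx : x * e = x) :
    mulAntipodeRight (comul₃ R A x * (comul₂ R A e ⊗ₜ 1)) * (comul e ⊗ₜ 1) =
      mulAntipodeRight (comul₃ R A x * (comul₂ R A e ⊗ₜ 1)) := by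
  rw [← counitRight_comul₂, ← mulAntipodeRight_mul_comulRight, comulRight_comul₂,
    (commute_comul₂_tmul_one_comul₃ hsub).right_comm, ← map_mul, hx]

theorem partialCoaction_comul_left {e x : A} (hsub : Commute (e ⊗ₜ[R] (1 : A)) (comul e))
    (hx : x * e = x) :
    mulAntipodeRight (rTensor A comulRight
        (rTensor A (partialCoaction R e) (partialCoaction R e x))) =
      mulAntipodeRight (rTensor A (rTensor A (partialCoaction R e))
        (rTensor A (partialCoaction R e) (partialCoaction R e x))) := by
  rw [rTensor_comulRight_partialCoaction_sq, partialCoaction_cube, mulAntipodeRight_mul_tmul_one,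
    mulAntipodeRight_mul_tmul_one, mulAntipodeRight_mul_tmul_one,
    mulAntipodeRight_comul₃_mul_comul hsub hx]

theorem partialCoaction_comul_right {e : A} (he : IsIdempotentElem e)
    (hsub : Commute (e ⊗ₜ[R] (1 : A)) (comul e)) (x : A) :
    rTensor A mulAntipodeRight
        (comulRight (rTensor A (partialCoaction R e) (partialCoaction R e x))) =
      rTensor A mulAntipodeRight (rTensor A (rTensor A (partialCoaction R e))
        (rTensor A (partialCoaction R e) (partialCoaction R e x))) := by
  have hcomm : Commute ((comul (R := R) e ⊗ₜ[R] (1 : A)) ⊗ₜ[R] (1 : A)) (comul₂ R A e ⊗ₜ 1) :=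
    (commute_comul_tmul_one_comul₂ hsub).tmul (Commute.refl 1)
  have hidem : IsIdempotentElem ((e ⊗ₜ[R] (1 : A)) ⊗ₜ[R] (1 : A)) := by
    simp only [IsIdempotentElem, Algebra.TensorProduct.tmul_mul_tmul, he.eq, mul_one]
  rw [comulRight_partialCoaction_sq, partialCoaction_cube, hcomm.symm.right_comm (comul₃ R A x),
    rTensor_mulAntipodeRight_mul_tmul_one, rTensor_mulAntipodeRight_mul_tmul_one,
    rTensor_mulAntipodeRight_mul_comul₂, mul_assoc, hidem.eq]

theorem stmt6_general {e : A} (he : IsIdempotentElem e)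
    (hsub : Commute (e ⊗ₜ[R] (1 : A)) (comul e)) :
    IsPartialCoactionOn (partialCoaction R e) (range (mulRight R e)) where
  mem_span x _ := partialCoaction_mem_span e x
  counit := by
    rintro _ ⟨h, rfl⟩
    rw [counitRight_partialCoaction, mulRight_apply, mul_assoc, he.eq]
  comul_left := by
    rintro _ ⟨h, rfl⟩
    exact partialCoaction_comul_left hsub (by rw [mulRight_apply, mul_assoc, he.eq])
  comul_right x _ := partialCoaction_comul_right he hsub x

end HopfAlgebra

lemma pcm2L_eq : pcm2L k H = mulAntipodeRight ∘ₗ rTensor H comulRight := by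
  ext a b c
  rfl

lemma pcm3L_eq : pcm3L k H = rTensor H mulAntipodeRight ∘ₗ comulRight := by
  ext a b c
  change rTensor H (lTensor H (mul' k H)) (rTensor H (TensorProduct.assoc k H H H).toLinearMap
      ((TensorProduct.assoc k (H ⊗[k] H) H H).symm
        ((a ⊗ₜ b) ⊗ₜ rTensor H (HopfAlgebra.antipode k) (Coalgebra.comul c)))) =
    rTensor H mulAntipodeRight
      ((TensorProduct.assoc k (H ⊗[k] H) H H).symm ((a ⊗ₜ b) ⊗ₜ Coalgebra.comul c))
  induction Coalgebra.comul (R := k) c with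
  | zero => simp only [map_zero, tmul_zero]
  | add t t' ht ht' => simp only [map_add, tmul_add, ht, ht']
  | tmul c₁ c₂ => rfl

/-- if `e` is a subcentral idempotent of a Hopf algebra `H`, then
`ρ_e(x) = x₍₁₎·e ⊗ x₍₂₎` maps the left ideal `H·e` into `(H·e) ⊗ H` and satisfies the
partial comodule axioms (PCM1), (PCM2) and (PCM3) on `H·e`. -/
theorem stmt6 (e : H) (he0 : e ≠ 0) (he : e * e = e)
    (hsub : (e ⊗ₜ[k] (1 : H)) * Coalgebra.comul (R := k) e
      = Coalgebra.comul (R := k) e * (e ⊗ₜ[k] (1 : H))) :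
    -- well-definedness: `ρ_e(H·e) ⊆ (H·e) ⊗ H`
    (∀ x ∈ {y : H | ∃ h : H, y = h * e},
      rhoE k H e x ∈ Submodule.span k
        {z : H ⊗[k] H | ∃ m ∈ {y : H | ∃ h : H, y = h * e}, ∃ h' : H, z = m ⊗ₜ[k] h'})
    -- (PCM1)
    ∧ (∀ x ∈ {y : H | ∃ h : H, y = h * e}, applyCounit k H (rhoE k H e x) = x)
    -- (PCM2)
    ∧ (∀ x ∈ {y : H | ∃ h : H, y = h * e},
        pcm2L k H (rhoE2 k H e x) = pcm2R k H (rhoE3 k H e x))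
    -- (PCM3)
    ∧ (∀ x ∈ {y : H | ∃ h : H, y = h * e},
        pcm3L k H (rhoE2 k H e x) = pcm3R k H (rhoE3 k H e x)) := by
  have hleft : {y : H | ∃ h : H, y = h * e} = (range (mulRight k e) : Set H) :=
    Set.ext fun y ↦ exists_congr fun h ↦ eq_comm
  have hρ := stmt6_general (R := k) he hsub
  rw [hleft, pcm2L_eq, pcm3L_eq]
  exact ⟨hρ.mem_span, hρ.counit, hρ.comul_left, hρ.comul_right⟩
end

section
/- Let K be a finite group and k a field whose characteristic does not divide |K|. Let e be a central idempotent of the group algebra kK and let I := (kK)·e. Define χ : K → k by letting χ(h) be the trace of the k-linear endomorphism of I given by left multiplication by h. Then e = |K|⁻¹ · Σ_{h ∈ K} χ(h⁻¹)·h in kK. -/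
open MonoidAlgebra

/-- The left ideal `(kK)·e` of the group algebra, as a `k`-submodule. -/
noncomputable def idealI (k K : Type*) [Field k] [Group K] (e : MonoidAlgebra k K) :
    Submodule k (MonoidAlgebra k K) :=
  LinearMap.range (LinearMap.mulRight k e)

/-- The character `χ : K → k`, `χ(h) :=` trace of the `k`-linear endomorphism of
`I = (kK)·e` given by left multiplication by `h`. -/
noncomputable def chi (k K : Type*) [Field k] [Group K] (e : MonoidAlgebra k K) (h : K) : k :=
  LinearMap.trace k (idealI k K e)
    ((LinearMap.mulLeft k (MonoidAlgebra.of k K h)).restrict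
      (p := idealI k K e) (q := idealI k K e)
      (fun x hx => by
        obtain ⟨a, rfl⟩ := LinearMap.mem_range.mp hx
        exact LinearMap.mem_range.mpr
          ⟨MonoidAlgebra.of k K h * a, by
            simp only [LinearMap.mulRight_apply, LinearMap.mulLeft_apply, mul_assoc]⟩))

/-!
For a central idempotent `e` of an algebra `A`, the map `x ↦ x * e` is a projection onto `A * e`.
Hence the trace of left multiplication by `a` on `A * e` is the trace of
`x ↦ a * (x * e) = (a * e) * x` on all of `A`. For a group algebra this is the regular character of
`a * e`, which is `|K|` times the coefficient of `a * e` at `1`; taking `a = h⁻¹` gives `|K|` times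
the coefficient of `e` at `h`.
-/

section IdempotentTrace

theorem trace_restrict_of_isProj {R M : Type*} [CommRing R] [AddCommGroup M] [Module R M]
    [Module.Free R M] [Module.Finite R M] {p : Submodule R M} [Module.Free R p]
    {π : M →ₗ[R] M} (hπ : LinearMap.IsProj p π) (f : M →ₗ[R] M) (hf : ∀ x ∈ p, f x ∈ p) :
    LinearMap.trace R p (f.restrict hf) = LinearMap.trace R M (f ∘ₗ π) := by
  have : Module.Finite R p :=
    .of_surjective hπ.codRestrict fun x => ⟨x, hπ.codRestrict_apply_cod x⟩
  have restrict_eq : f.restrict hf = hπ.codRestrict ∘ₗ f ∘ₗ p.subtype :=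
    LinearMap.ext fun x => Subtype.ext (hπ.map_id _ (hf x x.2)).symm
  calc
    LinearMap.trace R p (f.restrict hf)
      = LinearMap.trace R p (hπ.codRestrict ∘ₗ f ∘ₗ p.subtype) := by rw [restrict_eq]
    _ = LinearMap.trace R M ((f ∘ₗ p.subtype) ∘ₗ hπ.codRestrict) :=
      LinearMap.trace_comp_comm' _ _
    _ = LinearMap.trace R M (f ∘ₗ π) := rfl

variable (R : Type*) {A : Type*} [CommRing R] [Ring A] [Algebra R A]

theorem mulLeft_mem_range_mulRight (e a : A) :
    ∀ x ∈ LinearMap.range (LinearMap.mulRight R e),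
      LinearMap.mulLeft R a x ∈ LinearMap.range (LinearMap.mulRight R e) := by
  rintro _ ⟨b, rfl⟩
  exact ⟨a * b, mul_assoc a b e⟩

/-- The trace of left multiplication by `a` on the left ideal `A * e`, encoded as the range of
right multiplication by `e`. It extends `chi` from group elements to all elements of an arbitrary
algebra. The value is `0` by convention when `A * e` has no finite `R`-basis. -/
noncomputable def leftIdealTrace (e a : A) : R :=
  LinearMap.trace R (LinearMap.range (LinearMap.mulRight R e))
    ((LinearMap.mulLeft R a).restrict (mulLeft_mem_range_mulRight R e a))

theorem leftIdealTrace_eq_trace_mulLeft [Module.Free R A] [Module.Finite R A] {e : A}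
    [Module.Free R (LinearMap.range (LinearMap.mulRight R e))]
    (hidem : IsIdempotentElem e) (hcentral : ∀ x, Commute e x) (a : A) :
    leftIdealTrace R e a = LinearMap.trace R A (LinearMap.mulLeft R (a * e)) := by
  have isProj : LinearMap.IsProj (LinearMap.range (LinearMap.mulRight R e))
      (LinearMap.mulRight R e) :=
    LinearMap.IsIdempotentElem.isProj_range _ <| LinearMap.ext fun x => by
      simp [mul_assoc, hidem.eq]
  have comp_eq : LinearMap.mulLeft R a ∘ₗ LinearMap.mulRight R e = LinearMap.mulLeft R (a * e) :=
    LinearMap.ext fun x => by simp [(hcentral x).eq]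
  rw [leftIdealTrace, trace_restrict_of_isProj isProj, comp_eq]

end IdempotentTrace

section GroupAlgebra

variable {k K : Type*} [CommRing k] [Group K] [Fintype K]

theorem trace_mulLeft_eq_card_mul_coeff_one (a : MonoidAlgebra k K) :
    LinearMap.trace k (MonoidAlgebra k K) (LinearMap.mulLeft k a) =
      Fintype.card K * a.coeff 1 := by
  classical
  let b := MonoidAlgebra.basis K k
  have diag_eq (g : K) :
      LinearMap.toMatrix b b (LinearMap.mulLeft k a) g g = a.coeff 1 := by
    rw [LinearMap.toMatrix_apply, MonoidAlgebra.basis_apply, LinearMap.mulLeft_apply]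
    change (a * single g 1).coeff g = a.coeff 1
    rw [coeff_mul_single_apply, mul_inv_cancel, mul_one]
  simp only [LinearMap.trace_eq_matrix_trace k b, Matrix.trace, Matrix.diag_apply, diag_eq,
    Finset.sum_const, Finset.card_univ, nsmul_eq_mul]

theorem leftIdealTrace_of_inv_eq_card_mul_coeff {e : MonoidAlgebra k K}
    [Module.Free k (LinearMap.range (LinearMap.mulRight k e))]
    (hidem : IsIdempotentElem e) (hcentral : ∀ x, Commute e x) (h : K) :
    leftIdealTrace k e (MonoidAlgebra.of k K h⁻¹) = Fintype.card K * e.coeff h := by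
  have : Module.Free k (MonoidAlgebra k K) := .of_basis (MonoidAlgebra.basis K k)
  have : Module.Finite k (MonoidAlgebra k K) := .of_basis (MonoidAlgebra.basis K k)
  rw [leftIdealTrace_eq_trace_mulLeft k hidem hcentral, trace_mulLeft_eq_card_mul_coeff_one]
  simp

theorem stmt16_general {e : MonoidAlgebra k K}
    [Module.Free k (LinearMap.range (LinearMap.mulRight k e))]
    (hidem : IsIdempotentElem e) (hcentral : ∀ x, Commute e x) :
    (Fintype.card K : k) • e =
      ∑ h : K, leftIdealTrace k e (MonoidAlgebra.of k K h⁻¹) • MonoidAlgebra.of k K h := by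
  have expansion : ∑ h : K, e.coeff h • MonoidAlgebra.of k K h = e := by
    exact (MonoidAlgebra.basis K k).sum_repr e
  simp only [leftIdealTrace_of_inv_eq_card_mul_coeff hidem hcentral, mul_smul,
    ← Finset.smul_sum, expansion]

end GroupAlgebra

/-- let `K` be a finite group, `k` a field with `char k ∤ |K|`, `e` a central
idempotent of `kK` and `I := (kK)·e`. If `χ(h)` denotes the trace of left multiplication by
`h` on `I`, then `e = |K|⁻¹ · Σ_{h ∈ K} χ(h⁻¹)·h`. -/
theorem stmt16 (k K : Type*) [Field k] [Group K] [Fintype K]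
    (hchar : (Fintype.card K : k) ≠ 0)
    (e : MonoidAlgebra k K)
    (hidem : e * e = e)
    (hcentral : ∀ x : MonoidAlgebra k K, e * x = x * e) :
    e = (Fintype.card K : k)⁻¹ •
          ∑ h : K, chi k K e h⁻¹ • MonoidAlgebra.of k K h := by
  rw [eq_inv_smul_iff₀ hchar]
  exact stmt16_general hidem hcentral
end
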